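/- There exists an absolute constant C such that for every finite irreducible reversible Markov chain (Ω,P,π), every probability measure μ on Ω, every real t ≥ 2 and every s with 2 ≤ s ≤ e^t: d_L(t + ⌈s√t⌉, μ) ≤ d_c(t/2, μ) + C · s^{−1} √(log s). -/

import Mathlib

open Matrix Filter Asymptotics

/-- `P` is a stochastic matrix. -/
def IsStochastic {Ω : Type*} [Fintype Ω] (P : Matrix Ω Ω ℝ) : Prop :=
  (∀ x y, 0 ≤ P x y) ∧ ∀ x, ∑ y, P x y = 1

/-- `P` is irreducible. -/
def IsIrreducibleMatrix {Ω : Type*} [Fintype Ω] [DecidableEq Ω] (P : Matrix Ω Ω ℝ) : Prop :=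
  ∀ x y, ∃ n : ℕ, 0 < (P ^ n) x y

/-- `μ` is a probability vector. -/
def IsProbVec {Ω : Type*} [Fintype Ω] (μ : Ω → ℝ) : Prop :=
  (∀ x, 0 ≤ μ x) ∧ ∑ x, μ x = 1

/-- The chain `(P, pi)` is reversible. -/
def IsReversible {Ω : Type*} [Fintype Ω] (P : Matrix Ω Ω ℝ) (pi : Ω → ℝ) : Prop :=
  ∀ x y, pi x * P x y = pi y * P y x

/-- A finite irreducible Markov chain `P` with stationary distribution `pi`. -/
def IsMC {Ω : Type*} [Fintype Ω] [DecidableEq Ω] (P : Matrix Ω Ω ℝ) (pi : Ω → ℝ) : Prop :=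
  IsStochastic P ∧ IsIrreducibleMatrix P ∧ IsProbVec pi ∧ pi ᵥ* P = pi

/-- A finite irreducible reversible Markov chain `P` with stationary distribution `pi`. -/
def IsRevMC {Ω : Type*} [Fintype Ω] [DecidableEq Ω] (P : Matrix Ω Ω ℝ) (pi : Ω → ℝ) : Prop :=
  IsMC P pi ∧ IsReversible P pi

/-- Total-variation distance between two measures on a finite set. -/
noncomputable def tvDist {Ω : Type*} [Fintype Ω] (μ ν : Ω → ℝ) : ℝ :=
  (∑ x, |μ x - ν x|) / 2

/-- The lazy version `(I + P)/2` of `P`. -/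
noncomputable def lazyM {Ω : Type*} [Fintype Ω] [DecidableEq Ω] (P : Matrix Ω Ω ℝ) :
    Matrix Ω Ω ℝ :=
  (2 : ℝ)⁻¹ • (1 + P)

/-- `d_c(t, μ)`: TV distance from stationarity of the continuous-time chain at time `t`,
started from `μ`. -/
noncomputable def contDist {Ω : Type*} [Fintype Ω] [DecidableEq Ω] (P : Matrix Ω Ω ℝ) (pi : Ω → ℝ)
    (t : ℝ) (μ : Ω → ℝ) : ℝ :=
  tvDist (fun y => ∑' k : ℕ, Real.exp (-t) * t ^ k / (Nat.factorial k) * (μ ᵥ* (P ^ k)) y) pi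

/-- `d_L(t, μ)`: TV distance from stationarity of the lazy chain at (discrete) time `t`,
started from `μ`. -/
noncomputable def lazyDist {Ω : Type*} [Fintype Ω] [DecidableEq Ω] (P : Matrix Ω Ω ℝ)
    (pi : Ω → ℝ) (t : ℝ) (μ : Ω → ℝ) : ℝ :=
  tvDist (μ ᵥ* (lazyM P ^ ⌊t⌋₊)) pi

/-- `d_ave(t, μ)`: TV distance from stationarity of the averaged chain at (discrete) time `t`,
started from `μ`. -/
noncomputable def aveDist {Ω : Type*} [Fintype Ω] [DecidableEq Ω] (P : Matrix Ω Ω ℝ) (pi : Ω → ℝ)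
    (t : ℝ) (μ : Ω → ℝ) : ℝ :=
  tvDist (fun y => ((μ ᵥ* (P ^ ⌊t⌋₊)) y + (μ ᵥ* (P ^ (⌊t⌋₊ + 1))) y) / 2) pi

/-- The point mass at `x`. -/
noncomputable def deltaMass {Ω : Type*} [DecidableEq Ω] (x : Ω) : Ω → ℝ :=
  fun y => if y = x then 1 else 0

/-- Worst-case continuous-time distance `d_c(t)`. -/
noncomputable def contDistMax {Ω : Type*} [Fintype Ω] [DecidableEq Ω] (P : Matrix Ω Ω ℝ)
    (pi : Ω → ℝ) (t : ℝ) : ℝ :=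
  ⨆ x : Ω, contDist P pi t (deltaMass x)

/-- Worst-case lazy distance `d_L(t)`. -/
noncomputable def lazyDistMax {Ω : Type*} [Fintype Ω] [DecidableEq Ω] (P : Matrix Ω Ω ℝ)
    (pi : Ω → ℝ) (t : ℝ) : ℝ :=
  ⨆ x : Ω, lazyDist P pi t (deltaMass x)

/-- Worst-case averaged distance `d_ave(t)`. -/
noncomputable def aveDistMax {Ω : Type*} [Fintype Ω] [DecidableEq Ω] (P : Matrix Ω Ω ℝ)
    (pi : Ω → ℝ) (t : ℝ) : ℝ :=
  ⨆ x : Ω, aveDist P pi t (deltaMass x)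

/-- `φ_{α,C}(t) = t + ⌈C t^{(1+2α)/2} √(α log t)⌉`. -/
noncomputable def phiAC (α C t : ℝ) : ℝ :=
  t + ((⌈C * t ^ ((1 + 2 * α) / 2) * Real.sqrt (α * Real.log t)⌉ : ℤ) : ℝ)

/-- `ψ_{α,C}(x) = min (1, x + C |log(2x)|^{-α})`. -/
noncomputable def psiAC (α C x : ℝ) : ℝ :=
  min 1 (x + C * |Real.log (2 * x)| ^ (-α))

/-- `t_c(ε)`, the `ε`-mixing time of the continuous-time chain. -/
noncomputable def contMix {Ω : Type*} [Fintype Ω] [DecidableEq Ω] (P : Matrix Ω Ω ℝ)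
    (pi : Ω → ℝ) (ε : ℝ) : ℝ :=
  sInf {t : ℝ | 0 ≤ t ∧ contDistMax P pi t ≤ ε}

/-- `t_L(ε)`, the `ε`-mixing time of the lazy chain. -/
noncomputable def lazyMix {Ω : Type*} [Fintype Ω] [DecidableEq Ω] (P : Matrix Ω Ω ℝ)
    (pi : Ω → ℝ) (ε : ℝ) : ℕ :=
  sInf {t : ℕ | lazyDistMax P pi t ≤ ε}

/-- `t_ave(ε)`, the `ε`-mixing time of the averaged chain. -/
noncomputable def aveMix {Ω : Type*} [Fintype Ω] [DecidableEq Ω] (P : Matrix Ω Ω ℝ)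
    (pi : Ω → ℝ) (ε : ℝ) : ℕ :=
  sInf {t : ℕ | aveDistMax P pi t ≤ ε}

/-!
Write `Q = lazyM P`. As `(t / 2) (P - 1) = t (Q - 1)`, the continuous-time chain at time `t / 2` is
the chain of `Q` run for a Poisson time of mean `t`, which with probability at least `1 - 2 / s`
lies in a window of half-width `a = 2 √(t log s)` around `t`. Let `N` be the time of the lazy chain
and, for `0 ≤ f ≤ 1`, let `F` be the maximum of `Q ^ (N - k) f` over the times `k` of that window.
The law of the lazy chain at any such `k` integrates `F` to at least what its law at time `N` gives
`f`. Averaging over the Poisson time and comparing with the stationary law `π` therefore costs the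
continuous-time distance, the probability of leaving the window, and `E_π F - E_π f`.

This last term is at most the sum of `E_π |Q ^ j f - Q ^ (j + 1) f|` over the `2 a` values of `j` in
the window, each of which is at most `‖Q ^ j (1 - Q)‖ ≤ 1 / (j + 1)` in `ℓ²(π)`: since `Q` and
`1 - Q` are commuting positive operators, every term in the binomial expansion of
`1 = (Q + (1 - Q)) ^ (2 j + 2)` is positive, and the coefficient of `Q ^ (2 j) (1 - Q) ^ 2` is at
least `(j + 1) ^ 2`. As `j` is at least of order `s √t`, this gives the rate `√(log s) / s`.
-/

theorem commute_one_sub_self {R : Type*} [Ring R] (T : R) : Commute T (1 - T) :=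
  (Commute.one_right T).sub_right (Commute.refl T)

section StarOrderedRing

variable {R : Type*} [Ring R] [PartialOrder R] [StarRing R] [StarOrderedRing R] {S T U X : R}

theorem nonneg_of_mul_nonneg_of_mul_one_sub_nonneg (h₀ : 0 ≤ S * T) (h₁ : 0 ≤ S * (1 - T)) :
    0 ≤ S := by
  simpa only [← mul_add, add_sub_cancel, mul_one] using add_nonneg h₀ h₁

theorem semiconjBy_star_of_nonneg_mul (hS : 0 ≤ S) (hT : 0 ≤ S * T) :
    SemiconjBy S T (star T) := by
  simpa only [SemiconjBy, star_mul, hS.isSelfAdjoint.star_eq] using hT.isSelfAdjoint.star_eq.symm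

theorem nonneg_mul_sq_mul (hU : SemiconjBy S U (star U)) (hUX : Commute U X) (hX : 0 ≤ S * X) :
    0 ≤ S * (U ^ 2 * X) := by
  have h : S * (U ^ 2 * X) = star U * (S * X) * U := by
    rw [sq, mul_assoc, hUX.eq, ← mul_assoc, hU.eq, mul_assoc, mul_assoc, mul_assoc]
  exact h ▸ star_left_conjugate_nonneg hX U

theorem nonneg_mul_pow_mul_one_sub_pow (h₀ : 0 ≤ S * T) (h₁ : 0 ≤ S * (1 - T)) (a b : ℕ) :
    0 ≤ S * (T ^ a * (1 - T) ^ b) := by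
  have hS : 0 ≤ S := nonneg_of_mul_nonneg_of_mul_one_sub_nonneg h₀ h₁
  have hT : SemiconjBy S T (star T) := semiconjBy_star_of_nonneg_mul hS h₀
  have hT' : SemiconjBy S (1 - T) (star (1 - T)) := semiconjBy_star_of_nonneg_mul hS h₁
  have hcomm : Commute T (1 - T) := commute_one_sub_self T
  have hleft : ∀ a b, 0 ≤ S * (T ^ a * (1 - T) ^ b) → 0 ≤ S * (T ^ (a + 2) * (1 - T) ^ b) :=
    fun a b h ↦ by
      rw [add_comm, pow_add, mul_assoc]
      exact nonneg_mul_sq_mul hT ((Commute.self_pow T a).mul_right (hcomm.pow_right b)) h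
  have hright : ∀ a b, 0 ≤ S * (T ^ a * (1 - T) ^ b) → 0 ≤ S * (T ^ a * (1 - T) ^ (b + 2)) :=
    fun a b h ↦ by
      rw [add_comm, pow_add, ← mul_assoc (T ^ a), (hcomm.pow_pow a 2).eq, mul_assoc]
      exact nonneg_mul_sq_mul hT'
        ((hcomm.symm.pow_right a).mul_right (Commute.self_pow (1 - T) b)) h
  -- Only the odd-odd case is not a conjugation: there, use `T(1 - T) = T²(1 - T) + (1 - T)²T`.
  have hodd : 0 ≤ S * (T * (1 - T)) := by
    convert add_nonneg (nonneg_mul_sq_mul hT hcomm h₁) (nonneg_mul_sq_mul hT' hcomm.symm h₀)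
      using 1
    noncomm_ring
  induction a using Nat.twoStepInduction with
  | zero =>
    induction b using Nat.twoStepInduction with
    | zero => simpa using hS
    | one => simpa using h₁
    | more b ih _ => exact hright 0 b ih
  | one =>
    induction b using Nat.twoStepInduction with
    | zero => simpa using h₀
    | one => simpa using hodd
    | more b ih _ => exact hright 1 b ih
  | more a ih _ => exact hleft a b ih

theorem choose_nsmul_mul_pow_mul_one_sub_pow_le (h₀ : 0 ≤ S * T) (h₁ : 0 ≤ S * (1 - T))
    (a b : ℕ) : (a + b).choose a • (S * (T ^ a * (1 - T) ^ b)) ≤ S :=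
  calc (a + b).choose a • (S * (T ^ a * (1 - T) ^ b))
      ≤ ∑ ij ∈ Finset.HasAntidiagonal.antidiagonal (a + b),
          (a + b).choose ij.1 • (S * (T ^ ij.1 * (1 - T) ^ ij.2)) :=
        Finset.single_le_sum
          (f := fun ij : ℕ × ℕ ↦ (a + b).choose ij.1 • (S * (T ^ ij.1 * (1 - T) ^ ij.2)))
          (fun ij _ ↦ nsmul_nonneg (nonneg_mul_pow_mul_one_sub_pow h₀ h₁ ij.1 ij.2) _)
          (Finset.HasAntidiagonal.mem_antidiagonal.2 rfl : (a, b) ∈ _)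
    _ = S * (T + (1 - T)) ^ (a + b) := by
        simp only [(commute_one_sub_self T).add_pow', Finset.mul_sum, mul_smul_comm]
    _ = S := by rw [add_sub_cancel, one_pow, mul_one]

theorem sq_succ_le_choose (j : ℕ) : (j + 1) ^ 2 ≤ (2 * j + 2).choose (2 * j) := by
  rw [Nat.choose_symm_add, Nat.choose_two_right]
  refine (Nat.le_div_iff_mul_le two_pos).2 ?_
  rw [show 2 * j + 2 - 1 = 2 * j + 1 by lia]
  nlinarith

theorem sq_succ_nsmul_star_mul_mul_le (h₀ : 0 ≤ S * T) (h₁ : 0 ≤ S * (1 - T)) (j : ℕ) :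
    (j + 1) ^ 2 • (star (T ^ j * (1 - T)) * S * (T ^ j * (1 - T))) ≤ S := by
  have hS : 0 ≤ S := nonneg_of_mul_nonneg_of_mul_one_sub_nonneg h₀ h₁
  have hT : SemiconjBy S T (star T) := semiconjBy_star_of_nonneg_mul hS h₀
  have hT' : SemiconjBy S (1 - T) (star (1 - T)) := semiconjBy_star_of_nonneg_mul hS h₁
  have hcomm : Commute (T ^ j) (1 - T) := (commute_one_sub_self T).pow_left j
  have hsemi : star (T ^ j * (1 - T)) * S = S * (T ^ j * (1 - T)) := by
    rw [((hT.pow_right j).mul_right hT').eq, hcomm.eq, star_mul, star_pow]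
  have hsq : star (T ^ j * (1 - T)) * S * (T ^ j * (1 - T)) =
      S * (T ^ (2 * j) * (1 - T) ^ 2) := by
    rw [hsemi, mul_assoc, hcomm.symm.mul_mul_mul_comm, ← pow_add, ← two_mul, ← pow_two]
  rw [hsq]
  exact (nsmul_le_nsmul_left (nonneg_mul_pow_mul_one_sub_pow h₀ h₁ _ _)
    (sq_succ_le_choose j)).trans (choose_nsmul_mul_pow_mul_one_sub_pow_le h₀ h₁ (2 * j) 2)

end StarOrderedRing

theorem partialSups_le_add_sum_abs_sub {α : Type*} [AddCommGroup α] [Lattice α]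
    [IsOrderedAddMonoid α] (u : ℕ → α) (l : ℕ) :
    partialSups u l ≤ u 0 + ∑ i ∈ Finset.range l, |u i - u (i + 1)| := by
  induction l with
  | zero => simp
  | succ l ih =>
    have hstep : u (l + 1) ≤ partialSups u l + |u l - u (l + 1)| :=
      calc u (l + 1) = u l + -(u l - u (l + 1)) := by abel
        _ ≤ partialSups u l + |u l - u (l + 1)| :=
          add_le_add (le_partialSups u l) (neg_le_abs _)
    rw [← Order.succ_eq_add_one l, partialSups_succ, Order.succ_eq_add_one,
      Finset.sum_range_succ, ← add_assoc]
    exact sup_le (le_add_of_le_of_nonneg ih (abs_nonneg _)) (hstep.trans (by gcongr))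

section TotalVariation

variable {Ω : Type*} [Fintype Ω] {α β f : Ω → ℝ}

theorem tvDist_nonneg (α β : Ω → ℝ) : 0 ≤ tvDist α β :=
  div_nonneg (Finset.sum_nonneg fun _ _ ↦ abs_nonneg _) zero_le_two

theorem tvDist_eq_sum_posPart (h : ∑ x, α x = ∑ x, β x) :
    tvDist α β = ∑ x, (α x - β x)⁺ := by
  have hsum : ∑ x, |α x - β x| = 2 * ∑ x, (α x - β x)⁺ :=
    calc ∑ x, |α x - β x| = ∑ x, (|α x - β x| + (α x - β x)) := by
          rw [Finset.sum_add_distrib, Finset.sum_sub_distrib, h, sub_self, add_zero]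
      _ = 2 * ∑ x, (α x - β x)⁺ := by
          rw [Finset.mul_sum]
          exact Finset.sum_congr rfl fun x _ ↦ by rw [abs_add_eq_two_nsmul_posPart, nsmul_eq_mul,
            Nat.cast_two]
  rw [tvDist, hsum, mul_div_cancel_left₀ _ two_ne_zero]

theorem dotProduct_le_add_tvDist (h : ∑ x, α x = ∑ x, β x) (hf : f ∈ Set.Icc 0 1) :
    α ⬝ᵥ f ≤ β ⬝ᵥ f + tvDist α β := by
  rw [← sub_le_iff_le_add', ← sub_dotProduct, tvDist_eq_sum_posPart h]
  exact Finset.sum_le_sum fun x _ ↦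
    calc (α x - β x) * f x ≤ (α x - β x)⁺ * f x :=
          mul_le_mul_of_nonneg_right (le_posPart _) (hf.1 x)
      _ ≤ (α x - β x)⁺ := mul_le_of_le_one_right (posPart_nonneg _) (hf.2 x)

theorem exists_dotProduct_eq_add_tvDist (h : ∑ x, α x = ∑ x, β x) :
    ∃ f ∈ Set.Icc (0 : Ω → ℝ) 1, α ⬝ᵥ f = β ⬝ᵥ f + tvDist α β := by
  classical
  refine ⟨fun x ↦ if 0 ≤ α x - β x then 1 else 0,
    ⟨fun x ↦ by positivity, fun x ↦ ite_le_one le_rfl zero_le_one⟩, ?_⟩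
  rw [← sub_eq_iff_eq_add', ← sub_dotProduct, tvDist_eq_sum_posPart h]
  refine Finset.sum_congr rfl fun x _ ↦ ?_
  rw [posPart_eq_ite, mul_ite, mul_one, mul_zero]
  rfl

theorem IsProbVec.dotProduct_mem_Icc (hα : IsProbVec α) (hf : f ∈ Set.Icc 0 1) :
    α ⬝ᵥ f ∈ Set.Icc 0 1 := by
  refine ⟨dotProduct_nonneg_of_nonneg hα.1 hf.1, ?_⟩
  calc α ⬝ᵥ f ≤ α ⬝ᵥ 1 := dotProduct_le_dotProduct_of_nonneg_left hf.2 hα.1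
    _ = 1 := (dotProduct_one α).trans hα.2

theorem tvDist_le_one (hα : IsProbVec α) (hβ : IsProbVec β) : tvDist α β ≤ 1 := by
  obtain ⟨f, hf, h⟩ := exists_dotProduct_eq_add_tvDist (hα.2.trans hβ.2.symm)
  linarith [(hα.dotProduct_mem_Icc hf).2, (hβ.dotProduct_mem_Icc hf).1]

end TotalVariation

section StochasticMatrix

variable {Ω : Type*} [Fintype Ω] [DecidableEq Ω] {P : Matrix Ω Ω ℝ} {pi μ f : Ω → ℝ}

theorem IsStochastic.mem_rowStochastic (hP : IsStochastic P) : P ∈ rowStochastic ℝ Ω :=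
  mem_rowStochastic_iff_sum.2 hP

theorem IsProbVec.vecMul (hμ : IsProbVec μ) (hP : P ∈ rowStochastic ℝ Ω) :
    IsProbVec (μ ᵥ* P) := by
  refine ⟨nonneg_vecMul_of_mem_rowStochastic hP hμ.1, ?_⟩
  rw [← dotProduct_one]
  exact vecMul_dotProduct_one_eq_one_rowStochastic hP ((dotProduct_one μ).trans hμ.2)

theorem mulVec_mem_Icc (hP : P ∈ rowStochastic ℝ Ω) (hf : f ∈ Set.Icc 0 1) :
    P *ᵥ f ∈ Set.Icc 0 1 := by
  refine ⟨nonneg_mulVec_of_mem_rowStochastic hP hf.1, fun x ↦ ?_⟩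
  have h := nonneg_mulVec_of_mem_rowStochastic hP (sub_nonneg.2 hf.2) x
  rwa [mulVec_sub, one_vecMul_of_mem_rowStochastic hP, Pi.sub_apply, sub_nonneg] at h

theorem lazyM_mem_rowStochastic (hP : P ∈ rowStochastic ℝ Ω) : lazyM P ∈ rowStochastic ℝ Ω := by
  rw [lazyM, smul_add]
  exact convex_rowStochastic (one_mem _) hP (by norm_num) (by norm_num) (by norm_num)

theorem isHermitian_diagonal_mul_iff : (diagonal pi * P).IsHermitian ↔ IsReversible P pi := by
  simp only [IsHermitian.ext_iff, diagonal_mul, star_trivial]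
  exact forall_comm

theorem IsReversible.vecMul_eq (hrev : IsReversible P pi) (hP : P ∈ rowStochastic ℝ Ω) :
    pi ᵥ* P = pi := by
  ext y
  simp only [vecMul, dotProduct, hrev _ y, ← Finset.mul_sum]
  rw [(mem_rowStochastic_iff_sum.1 hP).2, mul_one]

theorem vecMul_pow_eq_self (h : pi ᵥ* P = pi) (n : ℕ) : pi ᵥ* P ^ n = pi := by
  induction n with
  | zero => rw [pow_zero, vecMul_one]
  | succ n ih => rw [pow_succ, ← vecMul_vecMul, ih, h]

theorem IsReversible.dotProduct_one_add_smul_mulVec (hrev : IsReversible P pi)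
    (hP : P ∈ rowStochastic ℝ Ω) {ε : ℝ} (hε : ε ^ 2 = 1) (f : Ω → ℝ) :
    f ⬝ᵥ (diagonal pi * (1 + ε • P)) *ᵥ f =
      (∑ x, ∑ y, pi x * P x y * (f x + ε * f y) ^ 2) / 2 := by
  have hrow : ∑ x, ∑ y, pi x * P x y * f x ^ 2 = ∑ x, pi x * f x ^ 2 :=
    Finset.sum_congr rfl fun x _ ↦ by
      rw [← Finset.sum_mul, ← Finset.mul_sum, (mem_rowStochastic_iff_sum.1 hP).2, mul_one]
  have hcol : ∑ x, ∑ y, pi x * P x y * f y ^ 2 = ∑ x, pi x * f x ^ 2 := by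
    rw [Finset.sum_comm, ← hrow]
    exact Finset.sum_congr rfl fun y _ ↦ Finset.sum_congr rfl fun x _ ↦ by rw [hrev]
  have hsq : ∀ x y, pi x * P x y * (f x + ε * f y) ^ 2 = pi x * P x y * f x ^ 2 +
      2 * (ε * (f x * (pi x * (P x y * f y)))) + pi x * P x y * f y ^ 2 := fun x y ↦ by
    linear_combination pi x * P x y * f y ^ 2 * hε
  calc f ⬝ᵥ (diagonal pi * (1 + ε • P)) *ᵥ f
      = ∑ x, f x * (pi x * (f x + ε * ∑ y, P x y * f y)) := by
        simp only [← mulVec_mulVec, add_mulVec, one_mulVec, smul_mulVec, dotProduct,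
          mulVec_diagonal, Pi.add_apply, Pi.smul_apply, smul_eq_mul]
        rfl
    _ = ∑ x, pi x * f x ^ 2 + ∑ x, ∑ y, ε * (f x * (pi x * (P x y * f y))) := by
        rw [← Finset.sum_add_distrib]
        refine Finset.sum_congr rfl fun x _ ↦ ?_
        simp only [← Finset.mul_sum]
        ring
    _ = (∑ x, ∑ y, pi x * P x y * (f x + ε * f y) ^ 2) / 2 := by
        simp only [hsq, Finset.sum_add_distrib, ← Finset.mul_sum, hrow, hcol]
        ring

theorem IsReversible.posSemidef_diagonal_mul_one_add_smul (hrev : IsReversible P pi)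
    (hP : P ∈ rowStochastic ℝ Ω) (hpi : 0 ≤ pi) {ε : ℝ} (hε : ε ^ 2 = 1) :
    (diagonal pi * (1 + ε • P)).PosSemidef := by
  refine .of_dotProduct_mulVec_nonneg ?_ fun f ↦ ?_
  · rw [mul_add, mul_one, mul_smul_comm]
    exact (isHermitian_diagonal pi).add
      ((isHermitian_diagonal_mul_iff.2 hrev).smul (IsSelfAdjoint.all ε))
  · rw [star_trivial, hrev.dotProduct_one_add_smul_mulVec hP hε]
    exact div_nonneg (Finset.sum_nonneg fun x _ ↦ Finset.sum_nonneg fun y _ ↦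
      mul_nonneg (mul_nonneg (hpi x) (hP.1 x y)) (sq_nonneg _)) zero_le_two

theorem IsReversible.posSemidef_diagonal_mul_lazyM (hrev : IsReversible P pi)
    (hP : P ∈ rowStochastic ℝ Ω) (hpi : 0 ≤ pi) : (diagonal pi * lazyM P).PosSemidef := by
  rw [lazyM, mul_smul_comm]
  simpa only [one_smul] using
    (hrev.posSemidef_diagonal_mul_one_add_smul hP hpi (one_pow 2)).smul (a := (2 : ℝ)⁻¹)
      (by norm_num)

theorem IsReversible.posSemidef_diagonal_mul_one_sub (hrev : IsReversible P pi)
    (hP : P ∈ rowStochastic ℝ Ω) (hpi : 0 ≤ pi) : (diagonal pi * (1 - P)).PosSemidef := by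
  simpa only [neg_smul, one_smul, ← sub_eq_add_neg] using
    hrev.posSemidef_diagonal_mul_one_add_smul hP hpi (neg_one_sq (R := ℝ))

theorem IsProbVec.sq_dotProduct_abs_le (hpi : IsProbVec pi) (g : Ω → ℝ) :
    (pi ⬝ᵥ |g|) ^ 2 ≤ g ⬝ᵥ diagonal pi *ᵥ g :=
  calc (pi ⬝ᵥ |g|) ^ 2 ≤ ∑ x, pi x * |g x| ^ 2 :=
        Real.pow_arith_mean_le_arith_mean_pow_of_even _ _ _ (fun x _ ↦ hpi.1 x) hpi.2 even_two
    _ = g ⬝ᵥ diagonal pi *ᵥ g := Finset.sum_congr rfl fun x _ ↦ by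
        rw [sq_abs, mulVec_diagonal]
        ring

open scoped MatrixOrder in
theorem dotProduct_abs_pow_mulVec_sub_le (h₀ : (diagonal pi * P).PosSemidef)
    (h₁ : (diagonal pi * (1 - P)).PosSemidef) (hpi : IsProbVec pi) (hf : f ∈ Set.Icc 0 1) (j : ℕ) :
    pi ⬝ᵥ |P ^ j *ᵥ f - P ^ (j + 1) *ᵥ f| ≤ 1 / (j + 1) := by
  set g : Ω → ℝ := P ^ j *ᵥ f - P ^ (j + 1) *ᵥ f
  have hgf : g = (P ^ j * (1 - P)) *ᵥ f := by rw [mul_one_sub, ← pow_succ, sub_mulVec]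
  have hle : ((j : ℝ) + 1) ^ 2 * (g ⬝ᵥ diagonal pi *ᵥ g) ≤ f ⬝ᵥ diagonal pi *ᵥ f := by
    have h := sq_succ_nsmul_star_mul_mul_le h₀.nonneg h₁.nonneg j
    replace h := (le_iff.1 h).dotProduct_mulVec_nonneg f
    simpa only [star_trivial, sub_mulVec, dotProduct_sub, sub_nonneg, ← Nat.cast_smul_eq_nsmul ℝ,
      smul_mulVec, dotProduct_smul, smul_eq_mul, ← mulVec_mulVec, ← hgf, dotProduct_mulVec f,
      star_eq_conjTranspose, conjTranspose_eq_transpose_of_trivial, vecMul_transpose, Nat.cast_pow,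
      Nat.cast_succ] using h
  have hle_one : f ⬝ᵥ diagonal pi *ᵥ f ≤ 1 :=
    calc f ⬝ᵥ diagonal pi *ᵥ f = pi ⬝ᵥ (f * f) := by
          simp only [dotProduct, mulVec_diagonal, Pi.mul_apply, mul_left_comm]
      _ ≤ 1 := (hpi.dotProduct_mem_Icc
          ⟨mul_nonneg hf.1 hf.1, mul_le_one₀ hf.2 hf.1 hf.2⟩).2
  rw [le_div_iff₀' (by positivity)]
  refine le_of_sq_le_sq ?_ zero_le_one
  calc (((j : ℝ) + 1) * (pi ⬝ᵥ |g|)) ^ 2 = ((j : ℝ) + 1) ^ 2 * (pi ⬝ᵥ |g|) ^ 2 := mul_pow _ _ _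
    _ ≤ ((j : ℝ) + 1) ^ 2 * (g ⬝ᵥ diagonal pi *ᵥ g) := by
        gcongr
        exact hpi.sq_dotProduct_abs_le g
    _ ≤ 1 ^ 2 := by linarith

theorem partialSups_pow_mulVec_mem_Icc (hP : P ∈ rowStochastic ℝ Ω) (hf : f ∈ Set.Icc 0 1)
    (a l : ℕ) : partialSups (fun i ↦ P ^ (a + i) *ᵥ f) l ∈ Set.Icc 0 1 := by
  have h : ∀ i, P ^ (a + i) *ᵥ f ∈ Set.Icc 0 1 := fun i ↦ mulVec_mem_Icc (pow_mem hP _) hf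
  exact ⟨(h l).1.trans (le_partialSups (fun i ↦ P ^ (a + i) *ᵥ f) l),
    partialSups_le _ _ _ fun i _ ↦ (h i).2⟩

theorem dotProduct_partialSups_pow_mulVec_le (hP : P ∈ rowStochastic ℝ Ω)
    (hpos : (diagonal pi * P).PosSemidef) (hpi : IsProbVec pi) (hf : f ∈ Set.Icc 0 1) (a l : ℕ) :
    pi ⬝ᵥ partialSups (fun i ↦ P ^ (a + i) *ᵥ f) l ≤ pi ⬝ᵥ f + l / (a + 1) := by
  have hrev : IsReversible P pi := isHermitian_diagonal_mul_iff.1 hpos.isHermitian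
  have hstat : pi ⬝ᵥ P ^ a *ᵥ f = pi ⬝ᵥ f := by
    rw [dotProduct_mulVec, vecMul_pow_eq_self (hrev.vecMul_eq hP)]
  have hincr : ∀ i ∈ Finset.range l,
      pi ⬝ᵥ |P ^ (a + i) *ᵥ f - P ^ (a + (i + 1)) *ᵥ f| ≤ 1 / (a + 1) := fun i _ ↦
    calc pi ⬝ᵥ |P ^ (a + i) *ᵥ f - P ^ (a + (i + 1)) *ᵥ f| ≤ 1 / ((a + i : ℕ) + 1) :=
          dotProduct_abs_pow_mulVec_sub_le hpos (hrev.posSemidef_diagonal_mul_one_sub hP hpi.1)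
            hpi hf (a + i)
      _ ≤ 1 / (a + 1) := by gcongr; lia
  calc pi ⬝ᵥ partialSups (fun i ↦ P ^ (a + i) *ᵥ f) l
      ≤ pi ⬝ᵥ (P ^ a *ᵥ f +
          ∑ i ∈ Finset.range l, |P ^ (a + i) *ᵥ f - P ^ (a + (i + 1)) *ᵥ f|) :=
        dotProduct_le_dotProduct_of_nonneg_left
          (partialSups_le_add_sum_abs_sub (fun i ↦ P ^ (a + i) *ᵥ f) l) hpi.1
    _ = pi ⬝ᵥ f +
          ∑ i ∈ Finset.range l, pi ⬝ᵥ |P ^ (a + i) *ᵥ f - P ^ (a + (i + 1)) *ᵥ f| := by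
        rw [dotProduct_add, hstat, dotProduct_sum]
    _ ≤ pi ⬝ᵥ f + l / (a + 1) := by
        grw [Finset.sum_le_card_nsmul _ _ _ hincr]
        rw [Finset.card_range, nsmul_eq_mul, mul_one_div]

theorem sum_mul_vecMul_pow_dotProduct_le (hP : P ∈ rowStochastic ℝ Ω)
    (hpos : (diagonal pi * P).PosSemidef) (hpi : IsProbVec pi) (hμ : IsProbVec μ)
    {ν : Ω → ℝ} (hν : ∑ x, ν x = 1) {w : ℕ → ℝ} (hw : ∀ k, 0 ≤ w k)
    {k₀ k₁ N : ℕ} (hN : k₁ ≤ N) (hle : ∑ k ∈ Finset.Icc k₀ k₁, w k • (μ ᵥ* P ^ k) ≤ ν)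
    (hf : f ∈ Set.Icc 0 1) :
    (∑ k ∈ Finset.Icc k₀ k₁, w k) * (μ ᵥ* P ^ N ⬝ᵥ f) ≤
      pi ⬝ᵥ f + (k₁ - k₀ : ℕ) / ((N - k₁ : ℕ) + 1) + tvDist ν pi := by
  set F : Ω → ℝ := partialSups (fun i ↦ P ^ (N - k₁ + i) *ᵥ f) (k₁ - k₀)
  have hF : F ∈ Set.Icc 0 1 := partialSups_pow_mulVec_mem_Icc hP hf _ _
  have hsup : ∀ k ∈ Finset.Icc k₀ k₁, μ ᵥ* P ^ N ⬝ᵥ f ≤ μ ᵥ* P ^ k ⬝ᵥ F := fun k hk ↦ by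
    obtain ⟨hk₀, hk₁⟩ := Finset.mem_Icc.1 hk
    calc μ ᵥ* P ^ N ⬝ᵥ f = μ ᵥ* P ^ k ⬝ᵥ P ^ (N - k₁ + (k₁ - k)) *ᵥ f := by
          rw [dotProduct_mulVec, vecMul_vecMul, ← pow_add]
          congr 3
          lia
      _ ≤ μ ᵥ* P ^ k ⬝ᵥ F := dotProduct_le_dotProduct_of_nonneg_left
          (le_partialSups_of_le (fun i ↦ P ^ (N - k₁ + i) *ᵥ f) (by lia))
          (hμ.vecMul (pow_mem hP k)).1
  calc (∑ k ∈ Finset.Icc k₀ k₁, w k) * (μ ᵥ* P ^ N ⬝ᵥ f)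
      ≤ ∑ k ∈ Finset.Icc k₀ k₁, w k * (μ ᵥ* P ^ k ⬝ᵥ F) := by
        rw [Finset.sum_mul]
        exact Finset.sum_le_sum fun k hk ↦ mul_le_mul_of_nonneg_left (hsup k hk) (hw k)
    _ = (∑ k ∈ Finset.Icc k₀ k₁, w k • (μ ᵥ* P ^ k)) ⬝ᵥ F := by
        simp only [sum_dotProduct, smul_dotProduct, smul_eq_mul]
    _ ≤ ν ⬝ᵥ F := dotProduct_le_dotProduct_of_nonneg_right hle hF.1
    _ ≤ pi ⬝ᵥ F + tvDist ν pi := dotProduct_le_add_tvDist (hν.trans hpi.2.symm) hF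
    _ ≤ pi ⬝ᵥ f + (k₁ - k₀ : ℕ) / ((N - k₁ : ℕ) + 1) + tvDist ν pi := by
        grw [dotProduct_partialSups_pow_mulVec_le hP hpos hpi hf]

theorem tvDist_vecMul_pow_le (hP : P ∈ rowStochastic ℝ Ω)
    (hpos : (diagonal pi * P).PosSemidef) (hpi : IsProbVec pi) (hμ : IsProbVec μ)
    {ν : Ω → ℝ} (hν : ∑ x, ν x = 1) {w : ℕ → ℝ} (hw : ∀ k, 0 ≤ w k)
    {k₀ k₁ N : ℕ} (hN : k₁ ≤ N) (hle : ∑ k ∈ Finset.Icc k₀ k₁, w k • (μ ᵥ* P ^ k) ≤ ν) :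
    tvDist (μ ᵥ* P ^ N) pi ≤ tvDist ν pi + (k₁ - k₀ : ℕ) / ((N - k₁ : ℕ) + 1) +
      (1 - ∑ k ∈ Finset.Icc k₀ k₁, w k) := by
  have hprob : ∀ k, IsProbVec (μ ᵥ* P ^ k) := fun k ↦ hμ.vecMul (pow_mem hP k)
  have hmass : ∑ k ∈ Finset.Icc k₀ k₁, w k ≤ 1 := by
    have h := dotProduct_le_dotProduct_of_nonneg_right hle (zero_le_one (α := Ω → ℝ))
    simp only [sum_dotProduct, smul_dotProduct] at h
    simpa only [dotProduct_one, (hprob _).2, smul_eq_mul, mul_one, hν] using h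
  obtain ⟨f, hf, hfN⟩ := exists_dotProduct_eq_add_tvDist ((hprob N).2.trans hpi.2.symm)
  linarith [sum_mul_vecMul_pow_dotProduct_le hP hpos hpi hμ hν hw hN hle hf,
    mul_le_of_le_one_right (sub_nonneg.2 hmass) ((hprob N).dotProduct_mem_Icc hf).2]

end StochasticMatrix

section Poisson

/-- The mass at `k` of the Poisson distribution of mean `t`, as a real number. -/
noncomputable def poissonWeight (t : ℝ) (k : ℕ) : ℝ :=
  Real.exp (-t) * t ^ k / k.factorial

theorem poissonWeight_nonneg {t : ℝ} (ht : 0 ≤ t) (k : ℕ) : 0 ≤ poissonWeight t k := by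
  unfold poissonWeight
  positivity

theorem hasSum_poissonWeight_smul_pow {𝔸 : Type*} [NormedRing 𝔸] [NormedAlgebra ℝ 𝔸]
    [CompleteSpace 𝔸] (t : ℝ) (A : 𝔸) :
    HasSum (fun k ↦ poissonWeight t k • A ^ k) (NormedSpace.exp (t • (A - 1))) := by
  let _ : NormedAlgebra ℚ 𝔸 := NormedAlgebra.restrictScalars ℚ ℝ 𝔸
  have hexp : NormedSpace.exp (t • (A - 1)) = Real.exp (-t) • NormedSpace.exp (t • A) :=
    calc NormedSpace.exp (t • (A - 1))
        = NormedSpace.exp (algebraMap ℝ 𝔸 (-t) + t • A) := by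
          rw [Algebra.algebraMap_eq_smul_one, neg_smul, smul_sub, neg_add_eq_sub]
      _ = NormedSpace.exp (algebraMap ℝ 𝔸 (-t)) * NormedSpace.exp (t • A) :=
          NormedSpace.exp_add_of_commute (Algebra.commutes _ _)
      _ = Real.exp (-t) • NormedSpace.exp (t • A) := by
          rw [← NormedSpace.algebraMap_exp_comm, ← Real.exp_eq_exp_ℝ, ← Algebra.smul_def]
  rw [hexp]
  convert (NormedSpace.exp_series_hasSum_exp' (𝕂 := ℝ) (t • A)).const_smul (Real.exp (-t)) using 2
    with k
  rw [poissonWeight, smul_pow, smul_smul, smul_smul]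
  congr 1
  ring

theorem hasSum_poissonWeight (t : ℝ) : HasSum (poissonWeight t) 1 := by
  simpa only [one_pow, smul_eq_mul, mul_one, sub_self, mul_zero, NormedSpace.exp_zero] using
    hasSum_poissonWeight_smul_pow t (1 : ℝ)

theorem hasSum_poissonWeight_mul_exp (t θ : ℝ) :
    HasSum (fun k ↦ poissonWeight t k * Real.exp (θ * (k - t)))
      (Real.exp (t * (Real.exp θ - 1 - θ))) := by
  have hterm : ∀ k : ℕ, k * θ + -(θ * t) = θ * (k - t) := fun k ↦ by ring
  have hsum : t * (Real.exp θ - 1) + -(θ * t) = t * (Real.exp θ - 1 - θ) := by ring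
  simpa only [smul_eq_mul, mul_assoc, ← Real.exp_eq_exp_ℝ, ← Real.exp_nat_mul, ← Real.exp_add,
    hterm, hsum] using
    (hasSum_poissonWeight_smul_pow t (Real.exp θ)).mul_right (Real.exp (-(θ * t)))

theorem exp_mul_exp_sub_one_sub_id_le {t θ : ℝ} (ht : 0 ≤ t) (hθ : |θ| ≤ 1) :
    Real.exp (t * (Real.exp θ - 1 - θ)) ≤ Real.exp (t * θ ^ 2) := by
  gcongr
  exact (le_abs_self _).trans (Real.abs_exp_sub_one_sub_id_le hθ)

theorem one_le_exp_mul_exp_add_exp {a u : ℝ} (h : a ≤ |u|) :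
    1 ≤ Real.exp (-a) * (Real.exp u + Real.exp (-u)) := by
  have habs : Real.exp |u| ≤ Real.exp u + Real.exp (-u) := by
    rcases abs_choice u with hu | hu <;> rw [hu]
    · exact le_add_of_nonneg_right (Real.exp_pos _).le
    · exact le_add_of_nonneg_left (Real.exp_pos _).le
  calc 1 ≤ Real.exp (-a + |u|) := Real.one_le_exp (by linarith)
    _ ≤ Real.exp (-a) * (Real.exp u + Real.exp (-u)) := by
      rw [Real.exp_add]
      gcongr

theorem sub_sum_le_of_one_le_compl {ι : Type*} {w g : ι → ℝ} {W G : ℝ} (hw : 0 ≤ w) (hg : 0 ≤ g)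
    {s : Finset ι} (hgs : ∀ i ∉ s, 1 ≤ g i) (hW : HasSum w W) (hG : HasSum (w * g) G) :
    W - ∑ i ∈ s, w i ≤ G := by
  classical
  have hs : HasSum (fun i ↦ if i ∈ s then w i else 0) (∑ i ∈ s, w i) := by
    rw [← Finset.sum_congr rfl fun i hi ↦ if_pos hi]
    exact hasSum_sum_of_ne_finset_zero fun i hi ↦ if_neg hi
  refine hasSum_le (fun i ↦ ?_) (hW.sub hs) hG
  split_ifs with hi
  · exact (sub_self (w i)).trans_le (mul_nonneg (hw i) (hg i))
  · exact (sub_zero (w i)).trans_le (le_mul_of_one_le_right (hw i) (hgs i hi))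

theorem one_sub_sum_poissonWeight_le {t a : ℝ} (ht : 0 < t) (ha : 0 ≤ a) (hat : a ≤ 2 * t)
    {s : Finset ℕ} (hs : ∀ k : ℕ, |k - t| ≤ a → k ∈ s) :
    1 - ∑ k ∈ s, poissonWeight t k ≤ 2 * Real.exp (-a ^ 2 / (4 * t)) := by
  -- The minimiser of the exponent `t * θ ^ 2 - θ * a` of the Chernoff bound.
  set θ : ℝ := a / (2 * t) with hθ
  have hθ₀ : 0 ≤ θ := by positivity
  have hθ₁ : |θ| ≤ 1 := by rwa [abs_of_nonneg hθ₀, div_le_one (by positivity)]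
  set g : ℕ → ℝ := fun k ↦
    Real.exp (-(θ * a)) * (Real.exp (θ * (k - t)) + Real.exp (-(θ * (k - t))))
  have hg : 0 ≤ g := fun k ↦ by positivity
  have hgs : ∀ k ∉ s, 1 ≤ g k := fun k hk ↦ by
    refine one_le_exp_mul_exp_add_exp ?_
    rw [abs_mul, abs_of_nonneg hθ₀]
    exact mul_le_mul_of_nonneg_left (not_le.1 fun h ↦ hk (hs k h)).le hθ₀
  have hmgf : HasSum (poissonWeight t * g) (Real.exp (-(θ * a)) *
      (Real.exp (t * (Real.exp θ - 1 - θ)) + Real.exp (t * (Real.exp (-θ) - 1 - -θ)))) := by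
    refine (((hasSum_poissonWeight_mul_exp t θ).add
      (hasSum_poissonWeight_mul_exp t (-θ))).mul_left _).congr_fun fun k ↦ ?_
    rw [Pi.mul_apply, ← mul_add, mul_left_comm, neg_mul]
  calc 1 - ∑ k ∈ s, poissonWeight t k
      ≤ Real.exp (-(θ * a)) * (Real.exp (t * (Real.exp θ - 1 - θ)) +
          Real.exp (t * (Real.exp (-θ) - 1 - -θ))) :=
        sub_sum_le_of_one_le_compl (poissonWeight_nonneg ht.le) hg hgs (hasSum_poissonWeight t) hmgf
    _ ≤ Real.exp (-(θ * a)) * (Real.exp (t * θ ^ 2) + Real.exp (t * (-θ) ^ 2)) := by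
        gcongr Real.exp (-(θ * a)) * (?_ + ?_)
        · exact exp_mul_exp_sub_one_sub_id_le ht.le hθ₁
        · exact exp_mul_exp_sub_one_sub_id_le ht.le (by rwa [abs_neg])
    _ = 2 * Real.exp (-a ^ 2 / (4 * t)) := by
        rw [neg_sq, ← two_mul, mul_left_comm, ← Real.exp_add]
        congr 2
        rw [hθ]
        field_simp
        ring

end Poisson

section HeatKernel

variable {Ω : Type*} [Fintype Ω] [DecidableEq Ω] {P : Matrix Ω Ω ℝ} {μ : Ω → ℝ}

/-- The transition matrix `H_t = exp (t (P - 1))` at time `t` of the continuous-time chain which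
jumps according to `P` at rate one. -/
noncomputable def heatKernel (P : Matrix Ω Ω ℝ) (t : ℝ) : Matrix Ω Ω ℝ :=
  NormedSpace.exp (t • (P - 1))

open scoped Matrix.Norms.Operator in
theorem hasSum_poissonWeight_smul_vecMul_pow (P : Matrix Ω Ω ℝ) (t : ℝ) (μ : Ω → ℝ) :
    HasSum (fun k ↦ poissonWeight t k • (μ ᵥ* P ^ k)) (μ ᵥ* heatKernel P t) := by
  have hcont : Continuous (Matrix.vecMulBilin ℝ ℝ μ : Matrix Ω Ω ℝ → _) :=
    continuous_const.matrix_vecMul continuous_id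
  have h := (hasSum_poissonWeight_smul_pow t P).map (Matrix.vecMulBilin ℝ ℝ μ) hcont
  simp only [Function.comp_def, vecMulBilin_apply, vecMul_smul] at h
  exact h

theorem heatKernel_lazyM (P : Matrix Ω Ω ℝ) (t : ℝ) :
    heatKernel (lazyM P) t = heatKernel P (t / 2) := by
  rw [heatKernel, heatKernel, lazyM]
  congr 1
  module

theorem contDist_eq_tvDist_vecMul_heatKernel (P : Matrix Ω Ω ℝ) (pi : Ω → ℝ) (t : ℝ) (μ : Ω → ℝ) :
    contDist P pi t μ = tvDist (μ ᵥ* heatKernel P t) pi := by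
  have h := Pi.hasSum.1 (hasSum_poissonWeight_smul_vecMul_pow P t μ)
  rw [contDist, funext fun y ↦ (h y).tsum_eq.symm]
  rfl

theorem IsProbVec.sum_vecMul_heatKernel (hμ : IsProbVec μ) (hP : P ∈ rowStochastic ℝ Ω) (t : ℝ) :
    ∑ x, (μ ᵥ* heatKernel P t) x = 1 := by
  have h := hasSum_sum fun x (_ : x ∈ Finset.univ) ↦
    Pi.hasSum.1 (hasSum_poissonWeight_smul_vecMul_pow P t μ) x
  simp only [Pi.smul_apply, smul_eq_mul, ← Finset.mul_sum, (hμ.vecMul (pow_mem hP _)).2,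
    mul_one] at h
  exact h.unique (hasSum_poissonWeight t)

theorem IsProbVec.sum_poissonWeight_smul_vecMul_pow_le (hμ : IsProbVec μ)
    (hP : P ∈ rowStochastic ℝ Ω) {t : ℝ} (ht : 0 ≤ t) (s : Finset ℕ) :
    ∑ k ∈ s, poissonWeight t k • (μ ᵥ* P ^ k) ≤ μ ᵥ* heatKernel P t :=
  sum_le_hasSum s (fun k _ ↦ smul_nonneg (poissonWeight_nonneg ht k)
    (hμ.vecMul (pow_mem hP k)).1) (hasSum_poissonWeight_smul_vecMul_pow P t μ)

end HeatKernel

theorem cast_floor_sub_ceil_le {x y : ℝ} (hx : 0 ≤ x) (hxy : y ≤ x) :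
    ((⌊x⌋₊ - ⌈y⌉₊ : ℕ) : ℝ) ≤ x - y := by
  rcases le_total ⌈y⌉₊ ⌊x⌋₊ with h | h
  · rw [Nat.cast_sub h]
    exact sub_le_sub (Nat.floor_le hx) (Nat.le_ceil y)
  · rwa [tsub_eq_zero_of_le h, Nat.cast_zero, sub_nonneg]

theorem half_le_sqrt_log {s : ℝ} (hs : 2 ≤ s) : 1 / 2 ≤ Real.sqrt (Real.log s) := by
  refine Real.le_sqrt_of_sq_le ?_
  have hlog : Real.log 2 ≤ Real.log s := Real.log_le_log two_pos hs
  linarith [Real.log_two_gt_d9]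

theorem four_mul_div_sub_le {r q s : ℝ} (hr : 0 ≤ r) (hq : 0 < q) (hs : 0 < s) (hrs : 4 * r ≤ s) :
    2 * (2 * r * q) / (s * q - 2 * r * q) ≤ 8 * (s⁻¹ * r) := by
  have hhalf : s * q / 2 ≤ s * q - 2 * r * q := by
    linarith [mul_le_mul_of_nonneg_right hrs hq.le]
  calc 2 * (2 * r * q) / (s * q - 2 * r * q) ≤ 2 * (2 * r * q) / (s * q / 2) := by gcongr
    _ = 8 * (s⁻¹ * r) := by field_simp; ring

theorem exp_neg_sq_two_mul_sqrt_log_div {s t : ℝ} (hs : 1 ≤ s) (ht : 0 < t) :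
    Real.exp (-(2 * Real.sqrt (Real.log s) * Real.sqrt t) ^ 2 / (4 * t)) = s⁻¹ := by
  have hexponent : -(2 * Real.sqrt (Real.log s) * Real.sqrt t) ^ 2 / (4 * t) = -Real.log s := by
    rw [mul_pow, mul_pow, Real.sq_sqrt (Real.log_nonneg hs), Real.sq_sqrt ht.le]
    field_simp
    ring
  rw [hexponent, Real.exp_neg, Real.exp_log (zero_lt_one.trans_le hs)]

section LazyChain

variable {Ω : Type*} [Fintype Ω] [DecidableEq Ω] {P : Matrix Ω Ω ℝ} {pi μ : Ω → ℝ}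

theorem IsReversible.tvDist_vecMul_lazyM_pow_le (hrev : IsReversible P pi)
    (hP : P ∈ rowStochastic ℝ Ω) (hpi : IsProbVec pi) (hμ : IsProbVec μ) {t a : ℝ} (ht : 0 < t)
    (ha : 0 ≤ a) (hat : a ≤ 2 * t) {N : ℕ} (hN : t + a < N + 1) :
    tvDist (μ ᵥ* lazyM P ^ N) pi ≤ contDist P pi (t / 2) μ + 2 * a / (N + 1 - (t + a)) +
      2 * Real.exp (-a ^ 2 / (4 * t)) := by
  have hL : lazyM P ∈ rowStochastic ℝ Ω := lazyM_mem_rowStochastic hP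
  have hpos := hrev.posSemidef_diagonal_mul_lazyM hP hpi.1
  have hfloor : (⌊t + a⌋₊ : ℝ) ≤ t + a := Nat.floor_le (by positivity)
  have hfloorN : ⌊t + a⌋₊ ≤ N := Nat.lt_succ_iff.1 ((Nat.floor_lt (by positivity)).2 (mod_cast hN))
  have hwindow : ∀ k : ℕ, |k - t| ≤ a → k ∈ Finset.Icc ⌈t - a⌉₊ ⌊t + a⌋₊ := fun k hk ↦ by
    obtain ⟨hlow, hhigh⟩ := abs_sub_le_iff.1 hk
    exact Finset.mem_Icc.2 ⟨Nat.ceil_le.2 (by linarith), Nat.le_floor (by linarith)⟩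
  have hfrac : ((⌊t + a⌋₊ - ⌈t - a⌉₊ : ℕ) : ℝ) / ((N - ⌊t + a⌋₊ : ℕ) + 1) ≤
      2 * a / (N + 1 - (t + a)) := by
    rw [Nat.cast_sub hfloorN]
    refine div_le_div₀ (by positivity) ?_ (sub_pos.2 hN) (by linarith)
    exact (cast_floor_sub_ceil_le (by positivity) (by linarith)).trans_eq (by ring)
  calc tvDist (μ ᵥ* lazyM P ^ N) pi
      ≤ tvDist (μ ᵥ* heatKernel (lazyM P) t) pi +
          (⌊t + a⌋₊ - ⌈t - a⌉₊ : ℕ) / ((N - ⌊t + a⌋₊ : ℕ) + 1) +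
          (1 - ∑ k ∈ Finset.Icc ⌈t - a⌉₊ ⌊t + a⌋₊, poissonWeight t k) :=
        tvDist_vecMul_pow_le hL hpos hpi hμ (hμ.sum_vecMul_heatKernel hL t)
          (poissonWeight_nonneg ht.le) hfloorN
          (hμ.sum_poissonWeight_smul_vecMul_pow_le hL ht.le _)
    _ ≤ contDist P pi (t / 2) μ + 2 * a / (N + 1 - (t + a)) +
          2 * Real.exp (-a ^ 2 / (4 * t)) := by
        rw [heatKernel_lazyM, ← contDist_eq_tvDist_vecMul_heatKernel]
        gcongr
        exact one_sub_sum_poissonWeight_le ht ha hat hwindow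

theorem IsReversible.tvDist_vecMul_lazyM_pow_le_add_sqrt_log (hrev : IsReversible P pi)
    (hP : P ∈ rowStochastic ℝ Ω) (hpi : IsProbVec pi) (hμ : IsProbVec μ) {t s : ℝ} (ht : 0 < t)
    (hs : 1 ≤ s) (hst : Real.log s ≤ t) (hlog : 4 * Real.sqrt (Real.log s) ≤ s) {N : ℕ}
    (hN : t + s * Real.sqrt t < N + 1) :
    tvDist (μ ᵥ* lazyM P ^ N) pi ≤
      contDist P pi (t / 2) μ + 8 * (s⁻¹ * Real.sqrt (Real.log s)) + 2 * s⁻¹ := by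
  set r : ℝ := Real.sqrt (Real.log s)
  set q : ℝ := Real.sqrt t
  have htail : Real.exp (-(2 * r * q) ^ 2 / (4 * t)) = s⁻¹ :=
    exp_neg_sq_two_mul_sqrt_log_div hs ht
  have hr : 0 ≤ r := Real.sqrt_nonneg _
  have hq : 0 < q := Real.sqrt_pos.2 ht
  have hwidth : 2 * r * q ≤ 2 * t := by
    rw [mul_assoc, ← Real.mul_self_sqrt ht.le]
    gcongr
    exact Real.sqrt_le_sqrt hst
  have hgap : 0 < s * q - 2 * r * q := by
    rw [← sub_mul]
    exact mul_pos (by linarith) hq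
  calc tvDist (μ ᵥ* lazyM P ^ N) pi
      ≤ contDist P pi (t / 2) μ + 2 * (2 * r * q) / (N + 1 - (t + 2 * r * q)) +
          2 * Real.exp (-(2 * r * q) ^ 2 / (4 * t)) :=
        hrev.tvDist_vecMul_lazyM_pow_le hP hpi hμ ht (by positivity) hwidth (by linarith)
    _ ≤ contDist P pi (t / 2) μ + 2 * (2 * r * q) / (s * q - 2 * r * q) +
          2 * Real.exp (-(2 * r * q) ^ 2 / (4 * t)) := by
        gcongr _ + _ / ?_ + _
        linarith
    _ ≤ contDist P pi (t / 2) μ + 8 * (s⁻¹ * r) + 2 * s⁻¹ := by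
        grw [htail, four_mul_div_sub_le hr hq (zero_lt_one.trans_le hs) hlog]

theorem lazy_dist_le_cont_dist_explicit_general (hP : IsStochastic P) (hrev : IsReversible P pi)
    (hpi : IsProbVec pi) (hμ : IsProbVec μ) {t s : ℝ} (hs : 2 ≤ s) (hst : s ≤ Real.exp t) :
    lazyDist P pi (t + ((⌈s * Real.sqrt t⌉ : ℤ) : ℝ)) μ ≤
      contDist P pi (t / 2) μ + 12 * s⁻¹ * Real.sqrt (Real.log s) := by
  have hs_pos : 0 < s := by linarith
  have hlog : Real.log s ≤ t := (Real.log_le_iff_le_exp hs_pos).2 hst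
  have ht : 0 < t := (Real.log_pos (by linarith)).trans_le hlog
  have hstoch : P ∈ rowStochastic ℝ Ω := hP.mem_rowStochastic
  rw [lazyDist]
  set N : ℕ := ⌊t + ((⌈s * Real.sqrt t⌉ : ℤ) : ℝ)⌋₊
  rcases lt_or_ge s (4 * Real.sqrt (Real.log s)) with htrivial | hwindow
  · have hone : tvDist (μ ᵥ* lazyM P ^ N) pi ≤ 1 :=
      tvDist_le_one (hμ.vecMul (pow_mem (lazyM_mem_rowStochastic hstoch) N)) hpi
    have hle : 1 ≤ 4 * (s⁻¹ * Real.sqrt (Real.log s)) := by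
      rw [mul_left_comm, ← div_eq_inv_mul, one_le_div hs_pos]
      exact htrivial.le
    have hnonneg : 0 ≤ contDist P pi (t / 2) μ := tvDist_nonneg _ _
    linarith
  · have hN : t + s * Real.sqrt t < N + 1 :=
      (add_le_add_right (Int.le_ceil _) t).trans_lt (Nat.lt_floor_add_one _)
    have hinv : s⁻¹ ≤ 2 * (s⁻¹ * Real.sqrt (Real.log s)) := by
      linarith [mul_le_mul_of_nonneg_left (half_le_sqrt_log hs) (inv_nonneg.2 hs_pos.le)]
    linarith [hrev.tvDist_vecMul_lazyM_pow_le_add_sqrt_log hstoch hpi hμ ht (by linarith) hlog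
      hwindow hN]

end LazyChain

/-- **Proposition 1.6 (eq. (8)) of Hermon–Peres.**
There is an absolute constant `C` such that for every finite irreducible reversible Markov
chain, every initial distribution `μ`, every `t ≥ 2` and every `2 ≤ s ≤ e^t`,
`d_L(t + ⌈s√t⌉, μ) ≤ d_c(t/2, μ) + C s⁻¹ √(log s)`. -/
theorem lazy_dist_le_cont_dist_explicit :
    ∃ C : ℝ, 0 < C ∧
      ∀ (Ω : Type) [Fintype Ω] [DecidableEq Ω]
        (P : Matrix Ω Ω ℝ) (pi : Ω → ℝ), IsRevMC P pi →
        ∀ μ : Ω → ℝ, IsProbVec μ →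
        ∀ t s : ℝ, 2 ≤ t → 2 ≤ s → s ≤ Real.exp t →
          lazyDist P pi (t + ((⌈s * Real.sqrt t⌉ : ℤ) : ℝ)) μ ≤
            contDist P pi (t / 2) μ + C * s⁻¹ * Real.sqrt (Real.log s) :=
  ⟨12, by norm_num, fun _ _ _ _ _ ⟨⟨hP, _, hpi, _⟩, hrev⟩ _ hμ _ _ _ hs hst ↦
    lazy_dist_le_cont_dist_explicit_general hP hrev hpi hμ hs hst⟩
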